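/- Let A, B be positive invertible operators with m·I ≤ A, B ≤ M·I for 0 < m < M and t ∈ (0,1). Then ((1−t)A + tB)² ≤ ((m+M)⁴/(16 m² M²)) · (A #_t B)². -/

import Mathlib

/-- The `t`-weighted geometric mean `A #_t B = A^{1/2} (A^{-1/2} B A^{-1/2})^t A^{1/2}`,
defined via the continuous functional calculus real power. -/
noncomputable def geomMean {H : Type*} [NormedAddCommGroup H] [InnerProductSpace ℂ H]
    [CompleteSpace H] (A B : H →L[ℂ] H) (t : ℝ) : H →L[ℂ] H :=
  A ^ ((1 : ℝ) / 2) * (A ^ (-(1 : ℝ) / 2) * B * A ^ (-(1 : ℝ) / 2)) ^ t * A ^ ((1 : ℝ) / 2)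

/-! The inverse `(A #ₜ B)⁻¹ = A⁻¹ #ₜ B⁻¹` is at most `(1 - t) A⁻¹ + t B⁻¹`, so the Kantorovich
bounds `A + mM A⁻¹ ≤ m + M` and `B + mM B⁻¹ ≤ m + M` give `X + mM (A #ₜ B)⁻¹ ≤ m + M` for
`X = (1 - t) A + t B`. The Bhatia–Kittaneh inequality `4 ‖X Y‖ ≤ ‖X + Y‖²` turns this into
`‖X (A #ₜ B)⁻¹‖ ≤ (m + M)² / (4 m M)`, which is the claim after squaring.

The Bhatia–Kittaneh inequality itself follows from two applications of the arithmetic-geometric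
mean inequality `2 ‖a* z b‖ ≤ ‖a a* z + z b b*‖`. For the latter, `‖a* z b‖²` lies in the spectrum
of `p q`, where `p = z b b*` and `q = z* a a*`, every real point of the spectrum of an element `c`
is at most `k` if `c + c* ≤ 2 k`, and `p q + (p q)* ≤ (p + q*) (p + q*)* / 2`. -/

section CStarAlgebra

variable {A : Type*} [CStarAlgebra A]

section Order

variable [PartialOrder A] [StarOrderedRing A]

theorem isStrictlyPositive_star_mul_self_of_add_star {c : A}
    (hc : IsStrictlyPositive (c + star c)) : IsStrictlyPositive (star c * c) := by
  cases subsingleton_or_nontrivial A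
  · exact .of_subsingleton
  obtain ⟨ε, hε, hle⟩ :=
    (CFC.exists_pos_algebraMap_le_iff hc.isSelfAdjoint).2 fun _ hx ↦ hc.spectrum_pos hx
  have hsq : 0 ≤ star (c - (ε / 2) • 1) * (c - (ε / 2) • 1) := star_mul_self_nonneg _
  have hexpand : star (c - (ε / 2) • 1) * (c - (ε / 2) • 1)
      = star c * c - (ε / 2) • (c + star c) + (ε / 2) ^ 2 • 1 := by
    simp only [star_sub, star_smul, star_one, star_trivial, sub_mul, mul_sub, smul_mul_assoc,
      mul_smul_comm, one_mul, mul_one]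
    module
  rw [Algebra.algebraMap_eq_smul_one] at hle
  refine (isStrictlyPositive_one.smul (c := (ε / 2) ^ 2) (by positivity)).of_le ?_
  calc (ε / 2) ^ 2 • (1 : A) = (ε / 2) • ε • (1 : A) - (ε / 2) ^ 2 • 1 := by module
    _ ≤ (ε / 2) • (c + star c) - (ε / 2) ^ 2 • 1 := by gcongr
    _ ≤ star c * c := by
      rw [hexpand] at hsq
      rw [← sub_nonneg]
      convert hsq using 1
      abel

theorem isUnit_of_isStrictlyPositive_add_star {c : A} (hc : IsStrictlyPositive (c + star c)) :
    IsUnit c := by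
  obtain ⟨l, hl⟩ := (isStrictlyPositive_star_mul_self_of_add_star hc).isUnit.exists_left_inv
  have hc' : IsStrictlyPositive (star c + star (star c)) := by rwa [star_star, add_comm]
  obtain ⟨r, hr⟩ := (isStrictlyPositive_star_mul_self_of_add_star hc').isUnit.exists_right_inv
  rw [star_star, mul_assoc] at hr
  rw [← mul_assoc] at hl
  exact isUnit_iff_exists_and_exists.2 ⟨⟨_, hr⟩, ⟨_, hl⟩⟩

theorem le_of_mem_spectrum_of_add_star_le {c : A} {k r : ℝ}
    (hc : c + star c ≤ algebraMap ℝ A (2 * k)) (hr : r ∈ spectrum ℝ c) : r ≤ k := by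
  by_contra! hkr
  refine hr (isUnit_of_isStrictlyPositive_add_star ?_)
  refine (isStrictlyPositive_algebraMap (show 0 < 2 * (r - k) by linarith)).of_le ?_
  have hsum : algebraMap ℝ A r - c + star (algebraMap ℝ A r - c)
      = algebraMap ℝ A (2 * r) - (c + star c) := by
    rw [star_sub, ← algebraMap_star_comm, star_trivial, two_mul, map_add]
    abel
  rw [hsum, mul_sub, map_sub]
  gcongr

theorem mul_add_star_mul_le (p q : A) :
    p * q + star (p * q) ≤ (1 / 2 : ℝ) • ((p + star q) * star (p + star q)) := by
  have hsq : 0 ≤ (1 / 2 : ℝ) • ((p - star q) * star (p - star q)) :=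
    smul_nonneg (by norm_num) (mul_star_self_nonneg _)
  rw [← sub_nonneg]
  convert hsq using 1
  simp only [star_sub, star_add, star_mul, star_star, sub_mul, mul_sub, add_mul, mul_add]
  module

end Order

theorem norm_mul_sq_mem_spectrum {x y : A} (hxy : x * y ≠ 0) :
    ‖x * y‖ ^ 2 ∈ spectrum ℝ (y * star y * (star x * x)) := by
  let := CStarAlgebra.spectralOrder A
  have := CStarAlgebra.spectralOrderedRing A
  have : Nontrivial A := ⟨_, _, hxy⟩
  have hmem : ‖x * y‖ ^ 2 ∈ spectrum ℝ (x * (y * star y * star x)) \ {0} := by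
    refine ⟨?_, by simpa using hxy⟩
    have h := CStarAlgebra.norm_mem_spectrum_of_nonneg (mul_star_self_nonneg (x * y))
    rw [CStarRing.norm_self_mul_star, ← sq] at h
    simpa only [star_mul, mul_assoc] using h
  rw [spectrum.nonzero_mul_comm] at hmem
  simpa only [mul_assoc] using hmem.1

/-- The **operator arithmetic-geometric mean inequality** for norms. -/
theorem two_mul_norm_star_mul_mul_le (a z b : A) :
    2 * ‖star a * z * b‖ ≤ ‖a * star a * z + z * b * star b‖ := by
  rcases eq_or_ne (star a * z * b) 0 with h0 | h0
  · simp [h0]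
  let := CStarAlgebra.spectralOrder A
  have := CStarAlgebra.spectralOrderedRing A
  set v := a * star a * z + z * b * star b with hv
  set p := z * b * star b with hp
  set q := star z * a * star a with hq
  have hmem : ‖star a * z * b‖ ^ 2 ∈ spectrum ℝ (p * q) := by
    rw [mul_assoc] at h0
    simpa only [hp, hq, star_mul, star_star, mul_assoc] using norm_mul_sq_mem_spectrum h0
  have hpq : p * q + star (p * q) ≤ algebraMap ℝ A (2 * (‖v‖ ^ 2 / 4)) :=
    calc p * q + star (p * q) ≤ (1 / 2 : ℝ) • ((p + star q) * star (p + star q)) :=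
          mul_add_star_mul_le p q
      _ = (1 / 2 : ℝ) • (v * star v) := by
          simp only [hv, hq, star_mul, star_star, mul_assoc, add_comm]
      _ ≤ (1 / 2 : ℝ) • algebraMap ℝ A (‖v‖ ^ 2) := by
          gcongr
          exact CStarAlgebra.mul_star_le_algebraMap_norm_sq
      _ = algebraMap ℝ A (2 * (‖v‖ ^ 2 / 4)) := by
          rw [Algebra.algebraMap_eq_smul_one, Algebra.algebraMap_eq_smul_one]
          module
  have hle := le_of_mem_spectrum_of_add_star_le hpq hmem
  exact le_of_sq_le_sq (by linarith) (norm_nonneg v)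

variable [PartialOrder A] [StarOrderedRing A]

/-- The **Bhatia–Kittaneh inequality**. -/
theorem four_mul_norm_mul_le_norm_add_sq {a b : A} (ha : 0 ≤ a) (hb : 0 ≤ b) :
    4 * ‖a * b‖ ≤ ‖a + b‖ ^ 2 := by
  have hab : 0 ≤ a + b := add_nonneg ha hb
  set x := CFC.sqrt a
  set y := CFC.sqrt b
  set s := CFC.sqrt (a + b)
  have hx : star x = x := (CFC.sqrt_nonneg a).star_eq
  have hy : star y = y := (CFC.sqrt_nonneg b).star_eq
  have hs : star s = s := (CFC.sqrt_nonneg (a + b)).star_eq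
  have hxx : x * x = a := CFC.sqrt_mul_sqrt_self a
  have hyy : y * y = b := CFC.sqrt_mul_sqrt_self b
  have hss : s * s = a + b := CFC.sqrt_mul_sqrt_self (a + b)
  have hprod : 2 * ‖a * b‖ ≤ ‖x * (a + b) * y‖ := by
    have h := two_mul_norm_star_mul_mul_le x (x * y) y
    rw [hx, hy] at h
    convert h using 3
    · simp only [← hxx, ← hyy, mul_assoc]
    · simp only [← hxx, ← hyy, mul_assoc, mul_add, add_mul]
  have hsum : 2 * ‖x * (a + b) * y‖ ≤ ‖(a + b) * (a + b)‖ := by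
    have h := two_mul_norm_star_mul_mul_le (s * x) 1 (s * y)
    rw [star_mul, star_mul, hx, hy, hs] at h
    convert h using 3
    · simp only [← hss, mul_one, mul_assoc]
    · calc (a + b) * (a + b) = s * (s * s) * s := by rw [← hss]; simp only [mul_assoc]
        _ = s * (x * x + y * y) * s := by rw [hss, hxx, hyy]
        _ = _ := by simp only [mul_one, one_mul, mul_add, add_mul, mul_assoc]
  have hnorm : ‖(a + b) * (a + b)‖ ≤ ‖a + b‖ ^ 2 := (norm_mul_le _ _).trans_eq (sq _).symm
  linarith

/-- The operator **Kantorovich bound**. -/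
theorem add_smul_rpow_neg_one_le {a : A} {m M : ℝ} (hm : 0 < m) (hma : m • (1 : A) ≤ a)
    (haM : a ≤ M • (1 : A)) : a + (m * M) • a ^ (-1 : ℝ) ≤ (m + M) • (1 : A) := by
  have ha : IsStrictlyPositive a := (isStrictlyPositive_one.smul hm).of_le hma
  rw [← Algebra.algebraMap_eq_smul_one] at hma haM ⊢
  have hmx := (algebraMap_le_iff_le_spectrum (ha := ha.isSelfAdjoint)).1 hma
  have hxM := (le_algebraMap_iff_spectrum_le (ha := ha.isSelfAdjoint)).1 haM
  have hcont : ContinuousOn (fun x : ℝ ↦ x ^ (-1 : ℝ)) (spectrum ℝ a) :=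
    continuousOn_id.rpow_const fun x hx ↦ .inl (ha.spectrum_pos hx).ne'
  have hcfc : a + (m * M) • a ^ (-1 : ℝ) = cfc (fun x : ℝ ↦ x + (m * M) • x ^ (-1 : ℝ)) a := by
    rw [CFC.rpow_eq_cfc_real, cfc_add .., cfc_smul .., cfc_id' ..]
  rw [hcfc]
  refine cfc_le_algebraMap _ _ _ fun x hx ↦ ?_
  have hx0 : 0 < x := ha.spectrum_pos hx
  rw [Real.rpow_neg_one, smul_eq_mul, ← div_eq_mul_inv, ← le_sub_iff_add_le', div_le_iff₀ hx0]
  have hquad : 0 ≤ (x - m) * (M - x) :=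
    mul_nonneg (sub_nonneg.2 (hmx x hx)) (sub_nonneg.2 (hxM x hx))
  linear_combination hquad

/-- The operator **Young inequality**. -/
theorem rpow_le_one_sub_smul_one_add_smul {a : A} (ha : 0 ≤ a) {t : ℝ} (ht : t ∈ Set.Icc 0 1) :
    a ^ t ≤ (1 - t) • (1 : A) + t • a := by
  have hcfc : (1 - t) • (1 : A) + t • a = cfc (fun x : ℝ ↦ (1 - t) + t • x) a := by
    rw [cfc_const_add .., cfc_smul .., cfc_id' .., Algebra.algebraMap_eq_smul_one]
  rw [hcfc, CFC.rpow_eq_cfc_real]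
  refine cfc_mono (fun x hx ↦ ?_) (continuousOn_id.rpow_const fun _ _ ↦ .inr ht.1) (by fun_prop)
  have h := Real.geom_mean_le_arith_mean2_weighted (sub_nonneg.2 ht.2) ht.1 zero_le_one
    (spectrum_nonneg_of_nonneg ha hx) (sub_add_cancel 1 t)
  rwa [Real.one_rpow, one_mul, mul_one] at h

theorem rpow_half_mul_rpow_neg_half {a : A} (ha : IsStrictlyPositive a) :
    a ^ ((1 : ℝ) / 2) * a ^ (-(1 : ℝ) / 2) = 1 := by
  rw [neg_div, CFC.rpow_mul_rpow_neg]

theorem rpow_neg_half_mul_rpow_half {a : A} (ha : IsStrictlyPositive a) :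
    a ^ (-(1 : ℝ) / 2) * a ^ ((1 : ℝ) / 2) = 1 := by
  rw [neg_div, CFC.rpow_neg_mul_rpow]

theorem self_mul_rpow_neg_one {a : A} (ha : IsStrictlyPositive a) : a * a ^ (-1 : ℝ) = 1 := by
  simpa only [CFC.rpow_one a] using CFC.rpow_mul_rpow_neg 1 ha

theorem eq_rpow_neg_one_of_mul_eq_one {a x : A} (ha : IsStrictlyPositive a) (hx : a * x = 1) :
    x = a ^ (-1 : ℝ) :=
  ha.isUnit.mul_left_cancel (hx.trans (self_mul_rpow_neg_one ha).symm)

/-- The `t`-weighted geometric mean `a #ₜ b` of strictly positive elements of a C⋆-algebra; on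
`H →L[ℂ] H` it unfolds to `geomMean`. -/
noncomputable def weightedGeomMean (a b : A) (t : ℝ) : A :=
  a ^ ((1 : ℝ) / 2) * (a ^ (-(1 : ℝ) / 2) * b * a ^ (-(1 : ℝ) / 2)) ^ t * a ^ ((1 : ℝ) / 2)

theorem weightedGeomMean_nonneg (a b : A) (t : ℝ) : 0 ≤ weightedGeomMean a b t :=
  conjugate_nonneg_of_nonneg CFC.rpow_nonneg CFC.rpow_nonneg

theorem weightedGeomMean_le {a b : A} (ha : IsStrictlyPositive a) (hb : 0 ≤ b) {t : ℝ}
    (ht : t ∈ Set.Icc 0 1) : weightedGeomMean a b t ≤ (1 - t) • a + t • b := by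
  set p := a ^ ((1 : ℝ) / 2) with hp
  set q := a ^ (-(1 : ℝ) / 2)
  have hpp : p * p = a := by
    rw [hp, ← CFC.rpow_add ha.isUnit, add_halves, CFC.rpow_one a]
  have hpq : p * q = 1 := rpow_half_mul_rpow_neg_half ha
  have hqp : q * p = 1 := rpow_neg_half_mul_rpow_half ha
  have hc : 0 ≤ q * b * q := conjugate_nonneg_of_nonneg hb CFC.rpow_nonneg
  calc weightedGeomMean a b t = p * (q * b * q) ^ t * p := rfl
    _ ≤ p * ((1 - t) • 1 + t • (q * b * q)) * p :=
      conjugate_le_conjugate_of_nonneg (rpow_le_one_sub_smul_one_add_smul hc ht) CFC.rpow_nonneg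
    _ = (1 - t) • (p * p) + t • (p * q * b * (q * p)) := by
      simp only [mul_add, add_mul, mul_smul_comm, smul_mul_assoc, mul_one, mul_assoc]
    _ = (1 - t) • a + t • b := by rw [hpp, hpq, hqp, one_mul, mul_one]

theorem weightedGeomMean_rpow_neg_one_mul {a b : A} (ha : IsStrictlyPositive a)
    (hb : IsStrictlyPositive b) (t : ℝ) :
    weightedGeomMean (a ^ (-1 : ℝ)) (b ^ (-1 : ℝ)) t * weightedGeomMean a b t = 1 := by
  set p := a ^ ((1 : ℝ) / 2) with hp
  set q := a ^ (-(1 : ℝ) / 2) with hq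
  set c := q * b * q with hc
  have hpq : p * q = 1 := rpow_half_mul_rpow_neg_half ha
  have hqp : q * p = 1 := rpow_neg_half_mul_rpow_half ha
  have hp_inv : (a ^ (-1 : ℝ)) ^ (-(1 : ℝ) / 2) = p := by
    rw [CFC.rpow_rpow a _ _ (by norm_num), hp]; norm_num
  have hq_inv : (a ^ (-1 : ℝ)) ^ ((1 : ℝ) / 2) = q := by
    rw [CFC.rpow_rpow a _ _ (by norm_num), hq]; norm_num
  have hc_pos : IsStrictlyPositive c :=
    .conjugate_of_isUnit_of_isSelfAdjoint b q ⟨⟨q, p, hqp, hpq⟩, rfl⟩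
      CFC.rpow_nonneg.isSelfAdjoint
  have hc_inv : p * b ^ (-1 : ℝ) * p = c ^ (-1 : ℝ) := by
    refine eq_rpow_neg_one_of_mul_eq_one hc_pos ?_
    calc c * (p * b ^ (-1 : ℝ) * p) = q * (b * (q * p) * b ^ (-1 : ℝ)) * p := by
          simp only [hc, mul_assoc]
      _ = 1 := by rw [hqp, mul_one, self_mul_rpow_neg_one hb, mul_one, hqp]
  have hct : (c ^ (-1 : ℝ)) ^ t = c ^ (-t) := by
    rw [CFC.rpow_rpow c _ _ (by norm_num), neg_one_mul]
  calc weightedGeomMean (a ^ (-1 : ℝ)) (b ^ (-1 : ℝ)) t * weightedGeomMean a b t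
      = q * c ^ (-t) * q * (p * c ^ t * p) := by
        rw [weightedGeomMean, hp_inv, hq_inv, hc_inv, hct]; rfl
    _ = q * (c ^ (-t) * (q * p) * c ^ t) * p := by simp only [mul_assoc]
    _ = 1 := by rw [hqp, mul_one, CFC.rpow_neg_mul_rpow t, mul_one, hqp]

theorem sq_mul_le_norm_sq_smul_sq {y g : A} (hyg : IsSelfAdjoint (y * g))
    (hg : IsSelfAdjoint g) : (y * g) ^ 2 ≤ ‖y‖ ^ 2 • g ^ 2 :=
  calc (y * g) ^ 2 = star g * (star y * y) * g := by
        nth_rw 1 [sq, ← hyg.star_eq, star_mul]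
        simp only [mul_assoc]
    _ ≤ ‖star y * y‖ • (star g * g) :=
        CStarAlgebra.star_left_conjugate_le_norm_smul (hb := .star_mul_self y)
    _ = ‖y‖ ^ 2 • g ^ 2 := by rw [CStarRing.norm_star_mul_self, hg.star_eq, sq, sq]

section Bounds

variable {a b : A} {m M t : ℝ}

theorem weighted_arith_add_smul_weightedGeomMean_le (hm : 0 < m) (hM : 0 ≤ M)
    (hma : m • (1 : A) ≤ a) (haM : a ≤ M • (1 : A)) (hmb : m • (1 : A) ≤ b)
    (hbM : b ≤ M • (1 : A)) (ht : t ∈ Set.Icc 0 1) :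
    (1 - t) • a + t • b + (m * M) • weightedGeomMean (a ^ (-1 : ℝ)) (b ^ (-1 : ℝ)) t
      ≤ (m + M) • (1 : A) := by
  have ha : IsStrictlyPositive a := (isStrictlyPositive_one.smul hm).of_le hma
  have hgeom := weightedGeomMean_le (.rpow a (-1)) (CFC.rpow_nonneg (a := b) (y := -1)) ht
  have ht' : 0 ≤ 1 - t := sub_nonneg.2 ht.2
  have ht0 := ht.1
  calc _ ≤ (1 - t) • a + t • b + (m * M) • ((1 - t) • a ^ (-1 : ℝ) + t • b ^ (-1 : ℝ)) := by
        gcongr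
    _ = (1 - t) • (a + (m * M) • a ^ (-1 : ℝ)) + t • (b + (m * M) • b ^ (-1 : ℝ)) := by module
    _ ≤ (1 - t) • ((m + M) • (1 : A)) + t • ((m + M) • (1 : A)) := by
        gcongr
        · exact add_smul_rpow_neg_one_le hm hma haM
        · exact add_smul_rpow_neg_one_le hm hmb hbM
    _ = (m + M) • (1 : A) := by module

theorem norm_weighted_arith_mul_weightedGeomMean_le (hm : 0 < m) (hM : 0 < M)
    (hma : m • (1 : A) ≤ a) (haM : a ≤ M • (1 : A)) (hmb : m • (1 : A) ≤ b)
    (hbM : b ≤ M • (1 : A)) (ht : t ∈ Set.Icc 0 1) :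
    ‖((1 - t) • a + t • b) * weightedGeomMean (a ^ (-1 : ℝ)) (b ^ (-1 : ℝ)) t‖
      ≤ (m + M) ^ 2 / (4 * (m * M)) := by
  have hsum := weighted_arith_add_smul_weightedGeomMean_le hm hM.le hma haM hmb hbM ht
  have ha : 0 ≤ a := (smul_nonneg hm.le zero_le_one).trans hma
  have hb : 0 ≤ b := (smul_nonneg hm.le zero_le_one).trans hmb
  set x := (1 - t) • a + t • b
  set h := weightedGeomMean (a ^ (-1 : ℝ)) (b ^ (-1 : ℝ)) t
  have hx : 0 ≤ x := add_nonneg (smul_nonneg (sub_nonneg.2 ht.2) ha) (smul_nonneg ht.1 hb)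
  have hh : 0 ≤ (m * M) • h := smul_nonneg (by positivity) (weightedGeomMean_nonneg _ _ _)
  have hnorm : ‖x + (m * M) • h‖ ≤ m + M := by
    rw [CStarAlgebra.norm_le_iff_le_algebraMap _ (by positivity) (add_nonneg hx hh),
      Algebra.algebraMap_eq_smul_one]
    exact hsum
  rw [le_div_iff₀' (by positivity)]
  calc 4 * (m * M) * ‖x * h‖ = 4 * ‖x * ((m * M) • h)‖ := by
        rw [mul_smul_comm, norm_smul, Real.norm_of_nonneg (by positivity), mul_assoc]
    _ ≤ ‖x + (m * M) • h‖ ^ 2 := four_mul_norm_mul_le_norm_add_sq hx hh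
    _ ≤ (m + M) ^ 2 := by gcongr

theorem weighted_arith_sq_le_geomMean_sq_general (hm : 0 < m) (hM : 0 < M)
    (hma : m • (1 : A) ≤ a) (haM : a ≤ M • (1 : A)) (hmb : m • (1 : A) ≤ b)
    (hbM : b ≤ M • (1 : A)) (ht : t ∈ Set.Icc 0 1) :
    ((1 - t) • a + t • b) ^ 2
      ≤ ((m + M) ^ 4 / (16 * m ^ 2 * M ^ 2)) • weightedGeomMean a b t ^ 2 := by
  have ha : IsStrictlyPositive a := (isStrictlyPositive_one.smul hm).of_le hma
  have hb : IsStrictlyPositive b := (isStrictlyPositive_one.smul hm).of_le hmb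
  have hnorm := norm_weighted_arith_mul_weightedGeomMean_le hm hM hma haM hmb hbM ht
  have hinv := weightedGeomMean_rpow_neg_one_mul ha hb t
  set x := (1 - t) • a + t • b
  set g := weightedGeomMean a b t
  set h := weightedGeomMean (a ^ (-1 : ℝ)) (b ^ (-1 : ℝ)) t
  have hg : 0 ≤ g := weightedGeomMean_nonneg a b t
  have hx : IsSelfAdjoint x :=
    .add (.smul (.all _) ha.isSelfAdjoint) (.smul (.all _) hb.isSelfAdjoint)
  have hxhg : x * h * g = x := by rw [mul_assoc, hinv, mul_one]
  calc x ^ 2 = (x * h * g) ^ 2 := by rw [hxhg]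
    _ ≤ ‖x * h‖ ^ 2 • g ^ 2 := sq_mul_le_norm_sq_smul_sq (by rwa [hxhg]) hg.isSelfAdjoint
    _ ≤ ((m + M) ^ 2 / (4 * (m * M))) ^ 2 • g ^ 2 := by
        have := CStarAlgebra.pow_nonneg hg 2
        gcongr
    _ = ((m + M) ^ 4 / (16 * m ^ 2 * M ^ 2)) • g ^ 2 := by
        congr 1
        field_simp
        norm_num

end Bounds

end CStarAlgebra

/-- For positive invertible `A, B` with `m • 1 ≤ A, B ≤ M • 1`, `0 < m < M`, and
`t ∈ (0,1)`, one has `((1-t)A + tB)² ≤ ((m+M)⁴/(16 m² M²)) • (A #ₜ B)²`. -/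
theorem weighted_arith_sq_le_geomMean_sq
    {H : Type*} [NormedAddCommGroup H] [InnerProductSpace ℂ H] [CompleteSpace H]
    (A B : H →L[ℂ] H) (hA : 0 ≤ A) (hB : 0 ≤ B)
    (hAinv : Invertible A) (hBinv : Invertible B)
    (m M : ℝ) (hm : 0 < m) (hmM : m < M)
    (hA1 : m • (1 : H →L[ℂ] H) ≤ A) (hA2 : A ≤ M • (1 : H →L[ℂ] H))
    (hB1 : m • (1 : H →L[ℂ] H) ≤ B) (hB2 : B ≤ M • (1 : H →L[ℂ] H))
    (t : ℝ) (ht0 : 0 < t) (ht1 : t < 1) :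
    ((1 - t) • A + t • B) ^ 2
      ≤ ((m + M) ^ 4 / (16 * m ^ 2 * M ^ 2)) • geomMean A B t ^ 2 := by
  exact weighted_arith_sq_le_geomMean_sq_general hm (hm.trans hmM) hA1 hA2 hB1 hB2 ⟨ht0.le, ht1.le⟩
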